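/- Let λ1, λ2, λ3, λ4 > 0 with λ2 ≠ λ3, and set k3 = λ1|λ2 - λ3| / (2√(λ2λ3)) > 0. Suppose A, B, C, D : [0,∞) → ℝ are differentiable, strictly positive, and satisfy A' = B/C + C/B + 2, B' = C/A + D/C - B²/(AC), C' = B/A + D/B - C²/(AB), D' = -D²/(BC), with A(0) = λ1, B(0) = λ2, C(0) = λ3, D(0) = λ4. Then A satisfies A'(t) = 4k3²/A(t)² + 4 for all t ≥ 0, so that A(t) - k3·arctan(A(t)/k3) = 4t + λ1 - k3·arctan(λ1/k3) for all t ≥ 0; consequently A(t)/t → 4 as t → ∞. -/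

import Mathlib

open Filter

theorem const_of_deriv_zero_aux (f : ℝ → ℝ) (h : ∀ t ≥ (0 : ℝ), HasDerivAt f 0 t) :
    ∀ t ≥ (0 : ℝ), f t = f 0 := by
  intro t ht
  refine constant_of_has_deriv_right_zero (a := 0) (b := t) ?_ ?_ t ⟨ht, le_refl t⟩
  · intro x hx
    exact (h x hx.1).continuousAt.continuousWithinAt
  · intro x hx
    exact (h x hx.1).hasDerivWithinAt

/-- Ricci flow on Sol₁⁴ (class U3I0, case (i) of Proposition 6), λ2 ≠ λ3:
`A' = 4k3²/A² + 4`, the integrated arctan equation, and `A(t)/t → 4`. -/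
theorem stmt13 (l1 l2 l3 l4 k3 : ℝ)
    (hl1 : 0 < l1) (hl2 : 0 < l2) (hl3 : 0 < l3) (hl4 : 0 < l4)
    (hne : l2 ≠ l3)
    (hk3 : k3 = l1 * |l2 - l3| / (2 * Real.sqrt (l2 * l3)))
    (A B C D : ℝ → ℝ)
    (hA0 : A 0 = l1) (hB0 : B 0 = l2) (hC0 : C 0 = l3) (hD0 : D 0 = l4)
    (hApos : ∀ t ≥ (0 : ℝ), 0 < A t)
    (hBpos : ∀ t ≥ (0 : ℝ), 0 < B t)
    (hCpos : ∀ t ≥ (0 : ℝ), 0 < C t)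
    (hDpos : ∀ t ≥ (0 : ℝ), 0 < D t)
    (hA' : ∀ t ≥ (0 : ℝ), HasDerivAt A (B t / C t + C t / B t + 2) t)
    (hB' : ∀ t ≥ (0 : ℝ), HasDerivAt B
      (C t / A t + D t / C t - B t ^ 2 / (A t * C t)) t)
    (hC' : ∀ t ≥ (0 : ℝ), HasDerivAt C
      (B t / A t + D t / B t - C t ^ 2 / (A t * B t)) t)
    (hD' : ∀ t ≥ (0 : ℝ), HasDerivAt D (-(D t ^ 2) / (B t * C t)) t) :
    0 < k3 ∧
    (∀ t ≥ (0 : ℝ), deriv A t = 4 * k3 ^ 2 / A t ^ 2 + 4) ∧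
    (∀ t ≥ (0 : ℝ), A t - k3 * Real.arctan (A t / k3) =
      4 * t + l1 - k3 * Real.arctan (l1 / k3)) ∧
    Tendsto (fun t => A t / t) atTop (nhds 4) := by
  have hk : 0 < k3 := by
    rw [hk3]
    have : 0 < |l2 - l3| := abs_pos.mpr (sub_ne_zero.mpr hne)
    positivity
  have hk2 : 4 * k3 ^ 2 = l1 ^ 2 * (l2 - l3) ^ 2 / (l2 * l3) := by
    rw [hk3, div_pow, mul_pow, mul_pow, sq_abs, Real.sq_sqrt (by positivity)]
    field_simp
    ring
  have hcons : ∀ t ≥ (0 : ℝ), A t ^ 2 * (B t - C t) ^ 2 / (B t * C t) = 4 * k3 ^ 2 := by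
    intro t ht
    rw [hk2, ← hA0, ← hB0, ← hC0]
    refine const_of_deriv_zero_aux (fun t => A t ^ 2 * (B t - C t) ^ 2 / (B t * C t)) ?_ t ht
    intro t ht
    have a := hApos t ht
    have b := hBpos t ht
    have c := hCpos t ht
    have hd := (((hA' t ht).pow 2).mul (((hB' t ht).sub (hC' t ht)).pow 2)).div
      ((hB' t ht).mul (hC' t ht)) (by simp only [Pi.mul_apply]; positivity)
    refine hd.congr_deriv ?_
    simp only [Pi.mul_apply, Pi.pow_apply, Pi.sub_apply]
    field_simp
    ring
  have hAd : ∀ t ≥ (0 : ℝ), HasDerivAt A (4 * k3 ^ 2 / A t ^ 2 + 4) t := by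
    intro t ht
    have a := hApos t ht
    have b := hBpos t ht
    have c := hCpos t ht
    refine (hA' t ht).congr_deriv ?_
    rw [← hcons t ht]
    field_simp
    ring
  have hint : ∀ t ≥ (0 : ℝ), A t - k3 * Real.arctan (A t / k3) =
      4 * t + l1 - k3 * Real.arctan (l1 / k3) := by
    intro t ht
    have key := const_of_deriv_zero_aux
      (fun t => A t - k3 * Real.arctan (A t / k3) - 4 * t) ?_ t ht
    · simp only [hA0] at key
      linarith
    intro t ht
    have a := hApos t ht
    have hd := ((hAd t ht).sub ((((hAd t ht).div_const k3).arctan).const_mul k3)).sub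
      ((hasDerivAt_id t).const_mul 4)
    refine hd.congr_deriv ?_
    have : 0 < 1 + (A t / k3) ^ 2 := by positivity
    field_simp
    ring
  refine ⟨hk, fun t ht => (hAd t ht).deriv, hint, ?_⟩
  have hb : Tendsto (fun t : ℝ => t⁻¹ *
      (l1 - k3 * Real.arctan (l1 / k3) + k3 * Real.arctan (A t / k3))) atTop (nhds 0) := by
    refine tendsto_inv_atTop_zero.zero_mul_isBoundedUnder_le ?_
    refine isBoundedUnder_of ⟨|l1 - k3 * Real.arctan (l1 / k3)| + k3 * (Real.pi / 2), ?_⟩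
    intro t
    have h1 : |Real.arctan (A t / k3)| ≤ Real.pi / 2 :=
      abs_le.mpr ⟨(Real.neg_pi_div_two_lt_arctan _).le, (Real.arctan_lt_pi_div_two _).le⟩
    simp only [Function.comp_apply, Real.norm_eq_abs]
    refine (abs_add_le _ _).trans ?_
    rw [abs_mul k3 (Real.arctan (A t / k3)), abs_of_pos hk]
    gcongr
  have h4 := hb.const_add 4
  rw [add_zero] at h4
  refine h4.congr' ?_
  filter_upwards [eventually_gt_atTop 0] with t ht
  have := hint t ht.le
  field_simp
  linarith
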